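/- Let p and q be general FNM processes. If p ~sp q, then (νa)p ~sp (νa)q for every a ∈ L. (Structure-preserving bisimilarity is a congruence for restriction.) -/

import Mathlib

/-- Actions of FNM: the invisible action τ, input actions `a ∈ L` and
output actions `ā ∈ L̄` (here `α` plays the role of the finite set `L`). -/
inductive Act (α : Type) where
  | tau : Act α
  | inp : α → Act α
  | out : α → Act α
  deriving DecidableEq

/-- (Open) FNM terms: `0`, the variable `x`, action prefixing `mu.t`, strong
prefixing `a̲.s`, choice `s+s`, constants `C`, parallel `t|t` and
restriction `(νa)p`.  The syntactic categories are carved out below. -/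
inductive FNM (α κ : Type) where
  | nil : FNM α κ
  | var : FNM α κ
  | pref : Act α → FNM α κ → FNM α κ
  | spref : α → FNM α κ → FNM α κ
  | sum : FNM α κ → FNM α κ → FNM α κ
  | const : κ → FNM α κ
  | par : FNM α κ → FNM α κ → FNM α κ
  | res : α → FNM α κ → FNM α κ
  deriving DecidableEq

namespace FNM

variable {α κ : Type}

mutual
  /-- Guarded terms: syntactic category `s ::= 0 | mu.t | a̲.s | s+s`
  (with `t` restriction-free). -/
  def Grd : FNM α κ → Prop
    | .nil => True
    | .var => False
    | .pref _ t => RF t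
    | .spref _ s => Grd s
    | .sum s1 s2 => Grd s1 ∧ Grd s2
    | .const _ => False
    | .par _ _ => False
    | .res _ _ => False
  /-- Restriction-free terms: syntactic category `t ::= q | t|t`, where
  `q ::= s | C | x` is the category of sequential terms. -/
  def RF : FNM α κ → Prop
    | .nil => True
    | .var => True
    | .pref _ t => RF t
    | .spref _ s => Grd s
    | .sum s1 s2 => Grd s1 ∧ Grd s2
    | .const _ => True
    | .par t1 t2 => RF t1 ∧ RF t2
    | .res _ _ => False
end

/-- Sequential terms: `q ::= s | C | x`. -/
def Seq (t : FNM α κ) : Prop :=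
  Grd t ∨ (∃ c, t = FNM.const c) ∨ t = FNM.var

/-- General terms: `p ::= t | (νa)p`. -/
def Gen : FNM α κ → Prop
  | .res _ p => Gen p
  | t => RF t

/-- Closed terms: no occurrence of the variable. -/
def VarFree : FNM α κ → Prop
  | .nil => True
  | .var => False
  | .pref _ t => VarFree t
  | .spref _ s => VarFree s
  | .sum s1 s2 => VarFree s1 ∧ VarFree s2
  | .const _ => True
  | .par t1 t2 => VarFree t1 ∧ VarFree t2
  | .res _ p => VarFree p

/-- Substitution `p{r/x}` of the term `r` for every occurrence of the
variable `x` in `p` (constants are dealt with via the environment). -/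
def subst (r : FNM α κ) : FNM α κ → FNM α κ
  | .nil => .nil
  | .var => r
  | .pref mu t => .pref mu (subst r t)
  | .spref a s => .spref a (subst r s)
  | .sum s1 s2 => .sum (subst r s1) (subst r s2)
  | .const c => .const c
  | .par t1 t2 => .par (subst r t1) (subst r t2)
  | .res a p => .res a (subst r p)

/-- `mu` uses the name `a`. -/
def _root_.Act.uses (a : α) : Act α → Prop
  | .tau => False
  | .inp b => b = a
  | .out b => b = a

/-- `a` occurs free in a term (through an environment `env` giving the body
of each process constant). -/
inductive FreeIn (env : κ → FNM α κ) (a : α) : FNM α κ → Prop where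
  | pref_act {mu : Act α} {t : FNM α κ} : mu.uses a → FreeIn env a (.pref mu t)
  | pref_cont {mu : Act α} {t : FNM α κ} : FreeIn env a t → FreeIn env a (.pref mu t)
  | spref_act {s : FNM α κ} : FreeIn env a (.spref a s)
  | spref_cont {b : α} {s : FNM α κ} : FreeIn env a s → FreeIn env a (.spref b s)
  | sum_l {s1 s2 : FNM α κ} : FreeIn env a s1 → FreeIn env a (.sum s1 s2)
  | sum_r {s1 s2 : FNM α κ} : FreeIn env a s2 → FreeIn env a (.sum s1 s2)
  | par_l {t1 t2 : FNM α κ} : FreeIn env a t1 → FreeIn env a (.par t1 t2)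
  | par_r {t1 t2 : FNM α κ} : FreeIn env a t2 → FreeIn env a (.par t1 t2)
  | res {b : α} {p : FNM α κ} : a ≠ b → FreeIn env a p → FreeIn env a (.res b p)
  | const {c : κ} : FreeIn env a (env c) → FreeIn env a (.const c)

/-- `a` occurs bound (by a restriction) in a term. -/
inductive BoundIn (env : κ → FNM α κ) (a : α) : FNM α κ → Prop where
  | res_here {p : FNM α κ} : BoundIn env a (.res a p)
  | res_in {b : α} {p : FNM α κ} : BoundIn env a p → BoundIn env a (.res b p)
  | pref {mu : Act α} {t : FNM α κ} : BoundIn env a t → BoundIn env a (.pref mu t)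
  | spref {b : α} {s : FNM α κ} : BoundIn env a s → BoundIn env a (.spref b s)
  | sum_l {s1 s2 : FNM α κ} : BoundIn env a s1 → BoundIn env a (.sum s1 s2)
  | sum_r {s1 s2 : FNM α κ} : BoundIn env a s2 → BoundIn env a (.sum s1 s2)
  | par_l {t1 t2 : FNM α κ} : BoundIn env a t1 → BoundIn env a (.par t1 t2)
  | par_r {t1 t2 : FNM α κ} : BoundIn env a t2 → BoundIn env a (.par t1 t2)
  | const {c : κ} : BoundIn env a (env c) → BoundIn env a (.const c)

end FNM

/-- A place of the net `N_FNM`: a sequential (extended) term, rendered as a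
pure sequential term together with the record `ρ : α → Bool` of which names
have been replaced by their restricted counterparts (`ρ a = true` represents
the substitution `{a'/a}`). -/
abbrev Place (α κ : Type) := FNM α κ × (α → Bool)

namespace FNM

variable {α κ : Type} [DecidableEq α] [DecidableEq κ] [Fintype α]

/-- The decomposition function `dec`, mapping (extended) terms to markings:
`dec(0) = θ`, `dec(p|q) = dec(p) ⊕ dec(q)`, `dec((νa)p) = dec(p){a'/a}`, and
a sequential term other than `0` is mapped to a single place. -/
def dec (ρ : α → Bool) : FNM α κ → Multiset (Place α κ)
  | .nil => 0
  | .par t1 t2 => dec ρ t1 + dec ρ t2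
  | .res a p => dec (Function.update ρ a true) p
  | t => {(t, ρ)}

end FNM

/-- Extended visible actions: inputs and outputs, possibly restricted
(`inp a true` represents `a'`, `out a false` represents `ā`, etc.). -/
inductive XAct (α : Type) where
  | inp : α → Bool → XAct α
  | out : α → Bool → XAct α

/-- Labels of net transitions: `τ` is the empty sequence, and otherwise a
sequence of extended actions. -/
abbrev Lbl (α : Type) := List (XAct α)

/-- An extended action carries no restricted name. -/
def XAct.unres {α : Type} : XAct α → Prop
  | .inp _ r => r = false
  | .out _ r => r = false

/-- The label contributed by prefix `mu` under the restriction record `ρ`. -/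
def actL {α : Type} (ρ : α → Bool) : Act α → Lbl α
  | .tau => []
  | .inp a => [XAct.inp a (ρ a)]
  | .out a => [XAct.out a (ρ a)]

/-- The synchronization relation `Sync(σ1, σ2, σ)`: `Sync(α, ᾱ, τ)`,
`Sync(aσ, ā, σ)` and `Sync(ā, aσ, σ)` for `σ ≠ ε` (also on restricted
actions). -/
inductive Sync {α : Type} : Lbl α → Lbl α → Lbl α → Prop where
  | inout (a : α) (r : Bool) : Sync [XAct.inp a r] [XAct.out a r] []
  | outin (a : α) (r : Bool) : Sync [XAct.out a r] [XAct.inp a r] []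
  | seqL (a : α) (r : Bool) (σ : Lbl α) :
      σ ≠ [] → Sync (XAct.inp a r :: σ) [XAct.out a r] σ
  | seqR (a : α) (r : Bool) (σ : Lbl α) :
      σ ≠ [] → Sync [XAct.out a r] (XAct.inp a r :: σ) σ

namespace FNM

variable {α κ : Type} [DecidableEq α] [DecidableEq κ] [Fintype α]

/-- A marking is admissible if for no name `a` both `a` and its restricted
counterpart `a'` occur free in it. -/
def Adm (env : κ → FNM α κ) (m : Multiset (Place α κ)) : Prop :=
  ∀ a : α, ¬ ((∃ p ∈ m, FreeIn env a p.1 ∧ p.2 a = false) ∧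
              (∃ p ∈ m, FreeIn env a p.1 ∧ p.2 a = true))

/-- The net transitions of `N_FNM`, generated by the rules (pref), (sum₁),
(sum₂), (cons), (s-pref) and (s-com). -/
inductive Tr (env : κ → FNM α κ) :
    Multiset (Place α κ) → Lbl α → Multiset (Place α κ) → Prop where
  | pref (ρ : α → Bool) (mu : Act α) (t : FNM α κ) :
      Tr env {(FNM.pref mu t, ρ)} (actL ρ mu) (dec ρ t)
  | sum1 (ρ : α → Bool) (s1 s2 : FNM α κ) (σ : Lbl α) (m : Multiset (Place α κ)) :
      Tr env (dec ρ s1) σ m → Tr env {(FNM.sum s1 s2, ρ)} σ m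
  | sum2 (ρ : α → Bool) (s1 s2 : FNM α κ) (σ : Lbl α) (m : Multiset (Place α κ)) :
      Tr env (dec ρ s2) σ m → Tr env {(FNM.sum s1 s2, ρ)} σ m
  | cons (ρ : α → Bool) (c : κ) (σ : Lbl α) (m : Multiset (Place α κ)) :
      Tr env (dec ρ (env c)) σ m → Tr env {(FNM.const c, ρ)} σ m
  | spref (ρ : α → Bool) (a : α) (s : FNM α κ) (σ : Lbl α) (m : Multiset (Place α κ)) :
      Tr env (dec ρ s) σ m →
      Tr env {(FNM.spref a s, ρ)} (XAct.inp a (ρ a) :: σ) m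
  | scom (m1 m2 m1' m2' : Multiset (Place α κ)) (σ1 σ2 σ : Lbl α) :
      Tr env m1 σ1 m1' → Tr env m2 σ2 m2' →
      Adm env (m1 + m2) → Sync σ1 σ2 σ →
      Tr env (m1 + m2) σ (m1' + m2')

/-- Tritions of the net `N_FNM`: only those whose label contains no
restricted action are kept. -/
def NetTr (env : κ → FNM α κ) (m : Multiset (Place α κ)) (σ : Lbl α)
    (m' : Multiset (Place α κ)) : Prop :=
  Tr env m σ m' ∧ ∀ x ∈ σ, x.unres

/-- First projection of a linking. -/
def pi1 (l : Multiset (Place α κ × Place α κ)) : Multiset (Place α κ) :=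
  l.map Prod.fst

/-- Second projection of a linking. -/
def pi2 (l : Multiset (Place α κ × Place α κ)) : Multiset (Place α κ) :=
  l.map Prod.snd

/-- Structure-preserving bisimulation on the net `N_FNM`. -/
def IsSPB (env : κ → FNM α κ) (R : Set (Multiset (Place α κ × Place α κ))) : Prop :=
  ∀ l ∈ R, ∀ c ≤ l,
    (∀ σ m1, NetTr env (pi1 c) σ m1 →
      ∃ m2 cb, NetTr env (pi2 c) σ m2 ∧
        pi1 cb = m1 ∧ pi2 cb = m2 ∧ l - c + cb ∈ R) ∧
    (∀ σ m2, NetTr env (pi2 c) σ m2 →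
      ∃ m1 cb, NetTr env (pi1 c) σ m1 ∧
        pi1 cb = m1 ∧ pi2 cb = m2 ∧ l - c + cb ∈ R)

/-- `p ~sp q`: some structure-preserving bisimulation contains a linking
projecting on `dec(p)` and `dec(q)`. -/
def SPEq (env : κ → FNM α κ) (p q : FNM α κ) : Prop :=
  ∃ R, IsSPB env R ∧ ∃ l ∈ R,
    pi1 l = dec (fun _ => false) p ∧ pi2 l = dec (fun _ => false) q

end FNM

namespace FNM

variable {α κ : Type} [DecidableEq α] [DecidableEq κ] [Fintype α]

def sr (ρ : α → Bool) (m : Multiset (Place α κ)) : Multiset (Place α κ) :=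
  m.map (fun p => (p.1, ρ))

def rlA (ρ : α → Bool) : XAct α → XAct α
  | .inp b _ => .inp b (ρ b)
  | .out b _ => .out b (ρ b)

def rl (ρ : α → Bool) (σ : Lbl α) : Lbl α := σ.map (rlA ρ)

def Good (ρ : α → Bool) (m : Multiset (Place α κ)) : Prop :=
  ∀ p ∈ m, RF p.1 ∧ p.2 = ρ

theorem RF_of_Grd {t : FNM α κ} (h : Grd t) : RF t := by
  cases t <;> simp_all [Grd, RF]

theorem sr_add (ρ : α → Bool) (m n : Multiset (Place α κ)) :
    sr ρ (m + n) = sr ρ m + sr ρ n := Multiset.map_add _ _ _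

theorem sr_sr (ρ ρ' : α → Bool) (m : Multiset (Place α κ)) :
    sr ρ (sr ρ' m) = sr ρ m := by
  simp [sr, Multiset.map_map, Function.comp_def]

theorem sr_good {ρ : α → Bool} {m : Multiset (Place α κ)} (h : Good ρ m) :
    sr ρ m = m := by
  unfold sr
  conv_rhs => rw [← Multiset.map_id m]
  apply Multiset.map_congr rfl
  intro p hp
  rw [← (h p hp).2]; rfl

theorem good_sr {ρ ρ' : α → Bool} {m : Multiset (Place α κ)} (h : Good ρ m) :
    Good ρ' (sr ρ' m) := by
  intro p hp
  simp only [sr, Multiset.mem_map] at hp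
  obtain ⟨q, hq, rfl⟩ := hp
  exact ⟨(h q hq).1, rfl⟩

theorem good_dec (ρ : α → Bool) {t : FNM α κ} (h : RF t) : Good ρ (dec ρ t) := by
  induction t with
  | par t1 t2 h1 h2 =>
    simp only [RF] at h
    intro p hp
    simp only [dec, Multiset.mem_add] at hp
    rcases hp with hp | hp
    · exact h1 h.1 p hp
    · exact h2 h.2 p hp
  | res => simp [RF] at h
  | _ => intro p hp; simp only [dec, Multiset.mem_singleton, Multiset.notMem_zero] at hp <;> (subst hp; exact ⟨h, rfl⟩)

theorem sr_dec (ρ ρ' : α → Bool) {t : FNM α κ} (h : RF t) :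
    sr ρ' (dec ρ t) = dec ρ' t := by
  induction t with
  | par t1 t2 h1 h2 =>
    simp only [RF] at h
    simp only [dec, sr_add, h1 h.1, h2 h.2]
  | res => simp [RF] at h
  | _ => simp [dec, sr]

theorem adm_good (env : κ → FNM α κ) {ρ : α → Bool} {m : Multiset (Place α κ)}
    (h : Good ρ m) : Adm env m := by
  rintro a ⟨⟨p, hp, _, h1⟩, ⟨q, hq, _, h2⟩⟩
  rw [(h p hp).2] at h1
  rw [(h q hq).2, h1] at h2
  cases h2

theorem sync_rl {σ1 σ2 σ : Lbl α} (ρ : α → Bool) (h : Sync σ1 σ2 σ) :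
    Sync (rl ρ σ1) (rl ρ σ2) (rl ρ σ) := by
  cases h with
  | inout a r => exact Sync.inout _ _
  | outin a r => exact Sync.outin _ _
  | seqL a r _ hn => exact Sync.seqL _ _ _ (by simpa [rl] using hn)
  | seqR a r _ hn => exact Sync.seqR _ _ _ (by simpa [rl] using hn)

theorem sync_fix {σ1 σ2 σ : Lbl α} (ρ : α → Bool) (h : Sync σ1 σ2 σ)
    (h1 : rl ρ σ1 = σ1) (h2 : rl ρ σ2 = σ2) : rl ρ σ = σ := by
  cases h with
  | inout a r => rfl
  | outin a r => rfl
  | seqL a r _ hn => simp only [rl, List.map_cons, List.cons.injEq] at h1; exact h1.2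
  | seqR a r _ hn => simp only [rl, List.map_cons, List.cons.injEq] at h2; exact h2.2

theorem good_single {ρ ρ' : α → Bool} {t : FNM α κ} (h : Good ρ {(t, ρ')}) :
    RF t ∧ ρ' = ρ := h (t, ρ') (by simp)

theorem tr_main (env : κ → FNM α κ) (henv : ∀ c, RF (env c)) (ρ : α → Bool)
    {m : Multiset (Place α κ)} {σ : Lbl α} {m' : Multiset (Place α κ)}
    (h : Tr env m σ m') (hg : Good ρ m) :
    Good ρ m' ∧ rl ρ σ = σ ∧ ∀ ρ', Tr env (sr ρ' m) (rl ρ' σ) (sr ρ' m') := by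
  induction h with
  | pref ρ0 mu t =>
    obtain ⟨h1, rfl⟩ := good_single hg
    simp only [RF] at h1
    refine ⟨good_dec _ h1, by cases mu <;> rfl, fun ρ' => ?_⟩
    rw [sr_dec _ _ h1]
    have := Tr.pref (env := env) ρ' mu t
    cases mu <;> exact this
  | sum1 ρ0 s1 s2 σ m _ ih =>
    obtain ⟨h1, rfl⟩ := good_single hg
    simp only [RF] at h1
    have h1 := RF_of_Grd h1.1
    obtain ⟨a, b, c⟩ := ih (good_dec _ h1)
    refine ⟨a, b, fun ρ' => ?_⟩
    have := c ρ'
    rw [sr_dec _ _ h1] at this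
    exact Tr.sum1 _ _ _ _ _ this
  | sum2 ρ0 s1 s2 σ m _ ih =>
    obtain ⟨h1, rfl⟩ := good_single hg
    simp only [RF] at h1
    have h1 := RF_of_Grd h1.2
    obtain ⟨a, b, c⟩ := ih (good_dec _ h1)
    refine ⟨a, b, fun ρ' => ?_⟩
    have := c ρ'
    rw [sr_dec _ _ h1] at this
    exact Tr.sum2 _ _ _ _ _ this
  | cons ρ0 k σ m _ ih =>
    obtain ⟨_, rfl⟩ := good_single hg
    have h1 := henv k
    obtain ⟨a, b, c⟩ := ih (good_dec _ h1)
    refine ⟨a, b, fun ρ' => ?_⟩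
    have := c ρ'
    rw [sr_dec _ _ h1] at this
    exact Tr.cons _ _ _ _ this
  | spref ρ0 x s σ m _ ih =>
    obtain ⟨h1, rfl⟩ := good_single hg
    simp only [RF] at h1
    have h1 := RF_of_Grd h1
    obtain ⟨a, b, c⟩ := ih (good_dec _ h1)
    refine ⟨a, ?_, fun ρ' => ?_⟩
    · show _ :: rl _ σ = _
      rw [b]; rfl
    · have := c ρ'
      rw [sr_dec _ _ h1] at this
      exact Tr.spref _ _ _ _ _ this
  | scom m1 m2 m1' m2' σ1 σ2 σ _ _ _ hs ih1 ih2 =>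
    obtain ⟨a1, b1, c1⟩ := ih1 (fun p hp => hg p (Multiset.mem_add.2 (Or.inl hp)))
    obtain ⟨a2, b2, c2⟩ := ih2 (fun p hp => hg p (Multiset.mem_add.2 (Or.inr hp)))
    refine ⟨?_, sync_fix ρ hs b1 b2, fun ρ' => ?_⟩
    · intro p hp
      rcases Multiset.mem_add.1 hp with hp | hp
      · exact a1 p hp
      · exact a2 p hp
    · have hA : Adm env (sr ρ' (m1 + m2)) := adm_good env (good_sr hg)
      rw [sr_add] at hA ⊢
      rw [sr_add]
      exact Tr.scom _ _ _ _ _ _ _ (c1 ρ') (c2 ρ') hA (sync_rl ρ' hs)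

/-- name `a` does not occur in a label -/
def NoName (a : α) (σ : Lbl α) : Prop :=
  ∀ x ∈ σ, ∀ r, x ≠ XAct.inp a r ∧ x ≠ XAct.out a r

theorem rl_upd {a : α} {σ : Lbl α} (ρ : α → Bool) (h : NoName a σ) :
    rl (Function.update ρ a true) σ = rl ρ σ := by
  apply List.map_congr_left
  intro x hx
  cases x with
  | inp b r =>
    have : b ≠ a := by rintro rfl; exact (h _ hx r).1 rfl
    simp [rlA, this]
  | out b r =>
    have : b ≠ a := by rintro rfl; exact (h _ hx r).2 rfl
    simp [rlA, this]

theorem noName_of {a : α} {σ : Lbl α} {ρ : α → Bool} (ha : ρ a = true)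
    (h : rl ρ σ = σ) (hu : ∀ x ∈ σ, x.unres) : NoName a σ := by
  intro x hx r
  rw [← h] at hx
  simp only [rl, List.mem_map] at hx
  obtain ⟨y, hy, rfl⟩ := hx
  have hz := hu (rlA ρ y) (by rw [← h]; exact List.mem_map_of_mem hy)
  cases y with
  | inp b s =>
    simp only [rlA, XAct.unres] at hz
    constructor <;> simp only [rlA, ne_eq, reduceCtorEq, not_false_eq_true, XAct.inp.injEq]
    rintro ⟨rfl, _⟩; simp_all
  | out b s =>
    simp only [rlA, XAct.unres] at hz
    constructor <;> simp only [rlA, ne_eq, reduceCtorEq, not_false_eq_true, XAct.out.injEq]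
    rintro ⟨rfl, _⟩; simp_all

theorem core (env : κ → FNM α κ) (henv : ∀ c, RF (env c)) (a : α) (ρ1 : α → Bool)
    {m1 : Multiset (Place α κ)} {σ : Lbl α} {m : Multiset (Place α κ)}
    (hg : Good ρ1 m1) (h : NetTr env (sr (Function.update ρ1 a true) m1) σ m) :
    ∃ m1', NetTr env m1 σ m1' ∧ m = sr (Function.update ρ1 a true) m1' ∧ Good ρ1 m1' ∧
      ∀ ρ2 m2 m2', Good ρ2 m2 → NetTr env m2 σ m2' →
        Good ρ2 m2' ∧
        NetTr env (sr (Function.update ρ2 a true) m2) σ (sr (Function.update ρ2 a true) m2') := by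
  obtain ⟨ht, hu⟩ := h
  have hg' : Good (Function.update ρ1 a true) (sr (Function.update ρ1 a true) m1) := good_sr hg
  obtain ⟨A, B, C⟩ := tr_main env henv _ ht hg'
  have hn : NoName a σ := noName_of (by simp) B hu
  have C1 := C ρ1
  rw [sr_sr, sr_good hg, ← rl_upd ρ1 hn, B] at C1
  refine ⟨sr ρ1 m, ⟨C1, hu⟩, ?_, good_sr A, ?_⟩
  · rw [sr_sr, sr_good A]
  · intro ρ2 m2 m2' hg2 ⟨h2, _⟩
    obtain ⟨A2, B2, C2⟩ := tr_main env henv _ h2 hg2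
    refine ⟨A2, ?_, hu⟩
    have := C2 (Function.update ρ2 a true)
    rwa [rl_upd _ hn, B2] at this

def srl (ρ1 ρ2 : α → Bool) (l : Multiset (Place α κ × Place α κ)) :
    Multiset (Place α κ × Place α κ) :=
  l.map (fun x => ((x.1.1, ρ1), (x.2.1, ρ2)))

theorem pi1_srl (ρ1 ρ2 : α → Bool) (l : Multiset (Place α κ × Place α κ)) :
    pi1 (srl ρ1 ρ2 l) = sr ρ1 (pi1 l) := by
  simp [pi1, srl, sr, Multiset.map_map, Function.comp_def]

theorem pi2_srl (ρ1 ρ2 : α → Bool) (l : Multiset (Place α κ × Place α κ)) :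
    pi2 (srl ρ1 ρ2 l) = sr ρ2 (pi2 l) := by
  simp [pi2, srl, sr, Multiset.map_map, Function.comp_def]

theorem exists_le_map {β γ : Type} (f : β → γ) (l : Multiset β) (c : Multiset γ)
    (h : c ≤ l.map f) : ∃ d ≤ l, d.map f = c := by
  induction l using Multiset.induction_on generalizing c with
  | empty => exact ⟨0, le_rfl, (by simpa using (h.antisymm (by simp)).symm)⟩
  | cons x l ih =>
    rw [Multiset.map_cons] at h
    by_cases hx : f x ∈ c
    · obtain ⟨c', rfl⟩ := Multiset.exists_cons_of_mem hx
      obtain ⟨d, hd, rfl⟩ := ih c' ((Multiset.cons_le_cons_iff _).1 h)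
      exact ⟨x ::ₘ d, (Multiset.cons_le_cons_iff _).2 hd, by simp⟩
    · obtain ⟨d, hd, rfl⟩ := ih c ((Multiset.le_cons_of_notMem hx).1 h)
      exact ⟨d, hd.trans (Multiset.le_cons_self _ _), rfl⟩

theorem srl_step (ρ1 ρ2 : α → Bool) {l c : Multiset (Place α κ × Place α κ)} (h : c ≤ l)
    (cb : Multiset (Place α κ × Place α κ)) :
    srl ρ1 ρ2 l - srl ρ1 ρ2 c + srl ρ1 ρ2 cb = srl ρ1 ρ2 (l - c + cb) := by
  obtain ⟨d, rfl⟩ := Multiset.le_iff_exists_add.1 h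
  simp [srl, Multiset.map_add]

theorem good_le {ρ : α → Bool} {m n : Multiset (Place α κ)} (h : m ≤ n) (hg : Good ρ n) :
    Good ρ m := fun p hp => hg p (Multiset.mem_of_le h hp)

theorem good_add {ρ : α → Bool} {m n : Multiset (Place α κ)} (h : Good ρ m) (hg : Good ρ n) :
    Good ρ (m + n) := fun p hp => (Multiset.mem_add.1 hp).elim (h p) (hg p)

theorem gen_dec (a : α) (p : FNM α κ) (hp : Gen p) (ρ : α → Bool) :
    ∃ ρ' t, RF t ∧ dec ρ p = dec ρ' t ∧
      dec (Function.update ρ a true) p = dec (Function.update ρ' a true) t := by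
  induction p generalizing ρ with
  | res b p ih =>
    obtain ⟨ρ', t, h1, h2, h3⟩ := ih (by simpa [Gen] using hp) (Function.update ρ b true)
    refine ⟨ρ', t, h1, h2, ?_⟩
    rw [← h3]
    by_cases hab : b = a
    · subst hab; simp [dec]
    · simp only [dec]; rw [Function.update_comm hab]
  | _ => exact ⟨ρ, _, by simpa only [Gen] using hp, rfl, rfl⟩

end FNM

open FNM in
/-- structure-preserving bisimilarity is a congruence for
restriction: for general FNM processes `p, q` with `p ~sp q`,
`(νa)p ~sp (νa)q` for every `a ∈ L`. -/
theorem speq_congr_res {α κ : Type} [DecidableEq α] [DecidableEq κ]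
    [Fintype α] [Finite κ]
    (env : κ → FNM α κ) (henv : ∀ c, Grd (env c) ∧ VarFree (env c))
    (p q : FNM α κ) (hp : Gen p) (hq : Gen q)
    (hpv : VarFree p) (hqv : VarFree q)
    (h : SPEq env p q) :
    ∀ a : α, SPEq env (FNM.res a p) (FNM.res a q) := by
  intro a
  obtain ⟨R, hR, l0, hl0, e1, e2⟩ := h
  have henv' : ∀ c, RF (env c) := fun c => RF_of_Grd (henv c).1
  obtain ⟨ρ1, t1, r1, p1, p1'⟩ := gen_dec a p hp (fun _ => false)
  obtain ⟨ρ2, t2, r2, p2, p2'⟩ := gen_dec a q hq (fun _ => false)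
  refine ⟨{l' | ∃ l ∈ R, Good ρ1 (pi1 l) ∧ Good ρ2 (pi2 l) ∧
    l' = srl (Function.update ρ1 a true) (Function.update ρ2 a true) l}, ?_,
    _, ⟨l0, hl0, ?_, ?_, rfl⟩, ?_, ?_⟩
  · rintro _ ⟨l, hl, g1, g2, rfl⟩ c' hc'
    obtain ⟨c, hc, rfl⟩ := exists_le_map _ _ _ hc'
    change (∀ σ m1, NetTr env (pi1 (srl (Function.update ρ1 a true) (Function.update ρ2 a true) c)) σ m1 → ∃ m2 cb, NetTr env (pi2 (srl (Function.update ρ1 a true) (Function.update ρ2 a true) c)) σ m2 ∧ pi1 cb = m1 ∧ pi2 cb = m2 ∧ srl (Function.update ρ1 a true) (Function.update ρ2 a true) l - srl (Function.update ρ1 a true) (Function.update ρ2 a true) c + cb ∈ _) ∧ (∀ σ m2, NetTr env (pi2 (srl (Function.update ρ1 a true) (Function.update ρ2 a true) c)) σ m2 → ∃ m1 cb, NetTr env (pi1 (srl (Function.update ρ1 a true) (Function.update ρ2 a true) c)) σ m1 ∧ pi1 cb = m1 ∧ pi2 cb = m2 ∧ srl (Function.update ρ1 a true) (Function.update ρ2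 a true) l - srl (Function.update ρ1 a true) (Function.update ρ2 a true) c + cb ∈ _)
    have gc1 : Good ρ1 (pi1 c) := good_le (Multiset.map_le_map hc) g1
    have gc2 : Good ρ2 (pi2 c) := good_le (Multiset.map_le_map hc) g2
    have gd1 : Good ρ1 (pi1 (l - c)) := good_le (Multiset.map_le_map tsub_le_self) g1
    have gd2 : Good ρ2 (pi2 (l - c)) := good_le (Multiset.map_le_map tsub_le_self) g2
    have a1 : ∀ x y : Multiset (Place α κ × Place α κ), pi1 (x + y) = pi1 x + pi1 y :=
      fun x y => Multiset.map_add _ _ _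
    have a2 : ∀ x y : Multiset (Place α κ × Place α κ), pi2 (x + y) = pi2 x + pi2 y :=
      fun x y => Multiset.map_add _ _ _
    obtain ⟨F, B⟩ := hR l hl c hc
    rw [pi1_srl, pi2_srl]
    constructor
    · intro σ m ht
      obtain ⟨m1', n1, rfl, k1, k⟩ := core env henv' a ρ1 gc1 ht
      obtain ⟨m2', cb, n2, rfl, rfl, hcb⟩ := F σ m1' n1
      obtain ⟨k2, n2'⟩ := k ρ2 _ _ gc2 n2
      exact ⟨_, srl _ _ cb, n2', pi1_srl _ _ _, pi2_srl _ _ _, _, hcb,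
        by rw [a1]; exact good_add gd1 k1, by rw [a2]; exact good_add gd2 k2, srl_step _ _ hc _⟩
    · intro σ m ht
      obtain ⟨m2', n2, rfl, k2, k⟩ := core env henv' a ρ2 gc2 ht
      obtain ⟨m1', cb, n1, rfl, rfl, hcb⟩ := B σ m2' n2
      obtain ⟨k1, n1'⟩ := k ρ1 _ _ gc1 n1
      exact ⟨_, srl _ _ cb, n1', pi1_srl _ _ _, pi2_srl _ _ _, _, hcb,
        by rw [a1]; exact good_add gd1 k1, by rw [a2]; exact good_add gd2 k2, srl_step _ _ hc _⟩
  · rw [e1, p1]; exact good_dec _ r1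
  · rw [e2, p2]; exact good_dec _ r2
  · rw [pi1_srl, e1, p1, sr_dec _ _ r1, ← p1']; rfl
  · rw [pi2_srl, e2, p2, sr_dec _ _ r2, ← p2']; rfl
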